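/- Let A = (a_{i,j})_{0≤i,j≤d-1} ∈ ℤ^{d×d} be a reduced idealizing matrix. Then the number of vectors β ∈ ℤ^d such that the (d+1)×(d+1) matrix Ã(β), with top-left d×d block A, last column (β_0,…,β_{d-1},1)ᵀ, and bottom row (0,…,0,1), is a reduced idealizing matrix equals a_{d-1,d-1}^d. -/

import Mathlib

/-!
Write `n = a_{d-1,d-1}` and `s = σ(A e_{d-1})`. The last row of the only new span condition forces
the coefficient of the new column, so `Ã(β)` is reduced idealizing exactly when
`0 ≤ β_i < a_{i,i}` for all `i` and `n β ∈ s + A ℤ^d`.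

The span conditions on `A` force `a_{j,j}` to divide all entries of the columns `0, …, j`; hence `n`
divides every vector of `s + A ℤ^d`, and the admissible `β` correspond to the `z ∈ ℤ^d` for which
`y = s + A z` satisfies `0 ≤ y_i < n a_{i,i}`, that is, `⌊y_i / a_{i,i}⌋ ∈ {0, …, n - 1}`. Since `A`
is upper triangular, back substitution shows that `z ↦ (⌊y_i / a_{i,i}⌋)_i` is a bijection of `ℤ^d`,
so there are `n^d` of them.
-/

/-- The down-shift of a vector: `σ(v)_0 = 0` and `σ(v)_i = v_{i-1}` for `i ≥ 1`. -/
def shiftDown {m : ℕ} (v : Fin m → ℤ) : Fin m → ℤ :=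
  fun i => if (i : ℕ) = 0 then 0
    else v ⟨(i : ℕ) - 1, lt_of_le_of_lt (Nat.sub_le _ _) i.isLt⟩

/-- An integer matrix is idealizing if it is upper triangular, has nonzero determinant and
for each `0 ≤ j ≤ m-2` the shifted `j`-th column lies in the subgroup generated by
columns `0,…,j+1`. -/
def Idealizing {m : ℕ} (B : Matrix (Fin m) (Fin m) ℤ) : Prop :=
  (∀ i j : Fin m, (j : ℕ) < (i : ℕ) → B i j = 0) ∧ B.det ≠ 0 ∧
    ∀ j : Fin m, (j : ℕ) + 2 ≤ m →
      shiftDown (fun i => B i j) ∈ Submodule.span ℤ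
        {w : Fin m → ℤ | ∃ l : Fin m, (l : ℕ) ≤ (j : ℕ) + 1 ∧ w = fun i => B i l}

/-- An idealizing matrix is reduced if its diagonal entries are positive and each entry above
the diagonal satisfies `0 ≤ b_{i,j} < b_{i,i}`. -/
def ReducedIdealizing {m : ℕ} (B : Matrix (Fin m) (Fin m) ℤ) : Prop :=
  Idealizing B ∧ (∀ i, 0 < B i i) ∧
    ∀ i j : Fin m, (i : ℕ) < (j : ℕ) → 0 ≤ B i j ∧ B i j < B i i

/-- The `(d+1)×(d+1)` matrix `Ã(β)` with top-left block `A`, last column `(β,1)ᵀ` and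
bottom row `(0,…,0,1)`. -/
def extendMatrix {d : ℕ} (A : Matrix (Fin d) (Fin d) ℤ) (β : Fin d → ℤ) :
    Matrix (Fin (d + 1)) (Fin (d + 1)) ℤ :=
  fun i j =>
    if hi : (i : ℕ) < d then
      (if hj : (j : ℕ) < d then A ⟨i, hi⟩ ⟨j, hj⟩ else β ⟨i, hi⟩)
    else if (j : ℕ) < d then 0 else 1


open Matrix

section UpperTriangular

theorem mulVec_apply_of_isUpperTriangular {κ R : Type*} [LinearOrder κ] [Fintype κ]
    [NonUnitalNonAssocSemiring R] {B : Matrix κ κ R} (hB : B.IsUpperTriangular) {c : κ → R} {k : κ}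
    (hc : ∀ l, k < l → c l = 0) :
    (B *ᵥ c) k = B k k * c k := by
  rw [mulVec, dotProduct]
  refine Fintype.sum_eq_single k fun l hl => ?_
  rcases lt_or_gt_of_ne hl with hlk | hkl
  · rw [hB hlk, zero_mul]
  · rw [hc l hkl, mul_zero]

variable {m : ℕ} {B : Matrix (Fin m) (Fin m) ℤ}

/-- Back substitution determines the coordinates of `z` from the last one to the first. -/
theorem bijective_add_mulVec_ediv_diag (hB : B.IsUpperTriangular) (hdiag : ∀ i, B i i ≠ 0)
    (v : Fin m → ℤ) : Function.Bijective fun z i => (v + B *ᵥ z) i / B i i := by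
  induction m with
  | zero => exact Unique.bijective
  | succ m ih =>
    let B' := B.submatrix Fin.castSucc Fin.castSucc
    let v' (t : ℤ) (i : Fin m) : ℤ := v i.castSucc + B i.castSucc (Fin.last m) * t
    have ih' (t : ℤ) : Function.Bijective fun z i => (v' t + B' *ᵥ z) i / B' i i :=
      ih (B := B') (fun _ _ hij => hB (Fin.castSucc_lt_castSucc_iff.2 hij)) (fun i => hdiag _) _
    have hsnoc (z : Fin m → ℤ) (t : ℤ) :
        (fun i => (v + B *ᵥ Fin.snoc z t) i / B i i) =
          Fin.snoc (fun i => (v' t + B' *ᵥ z) i / B' i i)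
            (v (Fin.last m) / B (Fin.last m) (Fin.last m) + t) := by
      refine funext (Fin.lastCases ?_ fun i => ?_)
      · have hlast : ∀ l, Fin.last m < l → (Fin.snoc z t : Fin (m + 1) → ℤ) l = 0 :=
          fun l hl => absurd hl l.le_last.not_gt
        simp [mulVec_apply_of_isUpperTriangular hB hlast, Int.add_mul_ediv_left _ _ (hdiag _)]
      · simp [mulVec, dotProduct, Fin.sum_univ_castSucc, B', v', add_assoc, add_comm]
    constructor
    · refine Fin.snocCases fun z t => Fin.snocCases fun z' t' h => ?_
      simp only [hsnoc, Fin.snoc_inj, add_right_inj] at h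
      obtain ⟨hz, rfl⟩ := h
      rw [(ih' t).injective hz]
    · refine Fin.snocCases fun q p => ?_
      obtain ⟨z, hz⟩ := (ih' (p - v (Fin.last m) / B (Fin.last m) (Fin.last m))).surjective q
      refine ⟨Fin.snoc z (p - v (Fin.last m) / B (Fin.last m) (Fin.last m)), ?_⟩
      simp only [hsnoc, Fin.snoc_inj, add_sub_cancel, and_true]
      exact hz

theorem card_add_mulVec_mem_box (hB : B.IsUpperTriangular) (hpos : ∀ i, 0 < B i i)
    (v : Fin m → ℤ) (k : Fin m → ℕ) :
    Nat.card {z : Fin m → ℤ | ∀ i, (v + B *ᵥ z) i ∈ Set.Ico 0 (k i * B i i)} = ∏ i, k i := by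
  have hdigit (z : Fin m → ℤ) (i : Fin m) :
      (v + B *ᵥ z) i ∈ Set.Ico 0 (k i * B i i) ↔
        (v + B *ᵥ z) i / B i i ∈ Set.Ico (0 : ℤ) (k i) := by
    simp only [Set.mem_Ico, Int.ediv_nonneg_iff_of_pos (hpos i), Int.ediv_lt_iff_lt_mul (hpos i)]
  let digits := Equiv.ofBijective _
    (bijective_add_mulVec_ediv_diag hB (fun i => (hpos i).ne') v)
  calc Nat.card {z : Fin m → ℤ | ∀ i, (v + B *ᵥ z) i ∈ Set.Ico 0 (k i * B i i)}
      = Nat.card {q : Fin m → ℤ // ∀ i, q i ∈ Set.Ico (0 : ℤ) (k i)} :=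
        Nat.card_congr (digits.subtypeEquiv fun z => forall_congr' (hdigit z))
    _ = ∏ i, k i := by
        rw [Nat.card_congr Equiv.subtypePiEquivPi, Nat.card_pi]
        exact Fintype.prod_congr _ _ fun i => by
          rw [Nat.card_eq_fintype_card (α := Set.Ico (0 : ℤ) (k i))]; simp

/-- Since `n` divides every point of `s + M ℤ^κ`, the admissible `β` are the quotients by `n` of
the points of `s + M ℤ^κ` in the `n`-fold dilated box. -/
theorem smul_image_box_eq_add_mulVec_image {ι κ : Type*} [Fintype κ] {M : Matrix ι κ ℤ} {n : ℤ}
    (hn : 0 < n) (hdvdM : ∀ i j, n ∣ M i j) {s : ι → ℤ} (hdvds : ∀ i, n ∣ s i) (b : ι → ℤ) :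
    (n • ·) '' {β : ι → ℤ | (∃ z, M *ᵥ z + n • β = s) ∧ ∀ i, β i ∈ Set.Ico 0 (b i)} =
      (s + M *ᵥ ·) '' {z | ∀ i, (s + M *ᵥ z) i ∈ Set.Ico 0 (n * b i)} := by
  have hbox (β : ι → ℤ) (i : ι) :
      (n • β) i ∈ Set.Ico 0 (n * b i) ↔ β i ∈ Set.Ico 0 (b i) := by
    simp [hn]
  ext y
  constructor
  · rintro ⟨β, ⟨⟨z, rfl⟩, hβ⟩, rfl⟩
    have hy : M *ᵥ z + n • β + M *ᵥ (-z) = n • β := by rw [mulVec_neg]; abel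
    exact ⟨-z, fun i => by rw [hy, hbox]; exact hβ i, hy⟩
  · rintro ⟨z, hz, rfl⟩
    have hdvd (i : ι) : n ∣ (s + M *ᵥ z) i := by
      have hM : n ∣ ∑ j, M i j * z j := Finset.dvd_sum fun j _ => (hdvdM i j).mul_right _
      exact dvd_add (hdvds i) hM
    choose β hβ using hdvd
    obtain hβ : s + M *ᵥ z = n • β := funext hβ
    refine ⟨β, ⟨⟨-z, ?_⟩, fun i => ?_⟩, hβ.symm⟩
    · rw [mulVec_neg, ← hβ]; abel
    · rw [← hbox, ← hβ]; exact hz i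

theorem card_box_exists_mulVec_add_smul_eq (hB : B.IsUpperTriangular) (hpos : ∀ i, 0 < B i i)
    {n : ℕ} (hn : 0 < n) (hdvdB : ∀ i j, (n : ℤ) ∣ B i j) {s : Fin m → ℤ}
    (hdvds : ∀ i, (n : ℤ) ∣ s i) :
    Nat.card {β : Fin m → ℤ | (∃ z, B *ᵥ z + (n : ℤ) • β = s) ∧ ∀ i, β i ∈ Set.Ico 0 (B i i)} =
      n ^ m := by
  have hn' : (0 : ℤ) < n := mod_cast hn
  have hscale : Function.Injective fun β : Fin m → ℤ => (n : ℤ) • β :=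
    smul_right_injective _ hn'.ne'
  have htranslate : Function.Injective fun z => s + B *ᵥ z := by
    have hdet : B.det ≠ 0 := by
      rw [det_of_isUpperTriangular hB]
      exact (Finset.prod_pos fun i _ => hpos i).ne'
    exact (add_right_injective s).comp (mulVec_injective_of_det_ne_zero hdet)
  rw [← Nat.card_image_of_injective hscale,
    smul_image_box_eq_add_mulVec_image hn' hdvdB hdvds fun i => B i i,
    Nat.card_image_of_injective htranslate,
    card_add_mulVec_mem_box hB hpos s fun _ => n, Finset.prod_const, Finset.card_fin]

end UpperTriangular

section LeadingColSpan

/-- The span of the columns of `B` with index at most `k`. An upper triangular matrix over `ℤ` with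
nonzero determinant is idealizing when the shift of each column `j` but the last lies in
`leadingColSpan B (j + 1)`. -/
def leadingColSpan {ι κ R : Type*} [Preorder κ] [Semiring R] (B : Matrix ι κ R) (k : κ) :
    Submodule R (ι → R) :=
  Submodule.span R (B.col '' Set.Iic k)

theorem mem_leadingColSpan_iff {ι κ R : Type*} [LinearOrder κ] [Fintype κ] [CommSemiring R]
    {B : Matrix ι κ R} {k : κ} {x : ι → R} :
    x ∈ leadingColSpan B k ↔ ∃ c : κ → R, (∀ l, k < l → c l = 0) ∧ B *ᵥ c = x := by
  have hcomb (c : κ → R) :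
      Finsupp.linearCombination R B.col (Finsupp.equivFunOnFinite.symm c) = B *ᵥ c := by
    ext i
    simp [Finsupp.linearCombination_apply, Finsupp.sum_fintype, mulVec, dotProduct, mul_comm]
  simp only [leadingColSpan, Finsupp.mem_span_image_iff_linearCombination,
    Finsupp.equivFunOnFinite.symm.surjective.exists, hcomb, Finsupp.mem_supported', Set.mem_Iic,
    not_le, Finsupp.equivFunOnFinite_symm_apply_apply]

end LeadingColSpan

section Shift

theorem shiftDown_eq_cons {m : ℕ} (v : Fin (m + 1) → ℤ) :
    shiftDown v = Fin.cons 0 (Fin.init v) := by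
  ext i
  cases i using Fin.cases <;> rfl

theorem shiftDown_succ {m : ℕ} (v : Fin (m + 1) → ℤ) (i : Fin m) :
    shiftDown v i.succ = v i.castSucc := rfl

theorem shiftDown_snoc {m : ℕ} (v : Fin (m + 1) → ℤ) (a : ℤ) :
    shiftDown (Fin.snoc v a : Fin (m + 2) → ℤ) = Fin.snoc (shiftDown v) (v (Fin.last m)) := by
  rw [shiftDown_eq_cons, shiftDown_eq_cons, Fin.init_snoc, ← Fin.cons_snoc_eq_snoc_cons,
    Fin.snoc_init_self]

theorem dvd_shiftDown {m : ℕ} {v : Fin m → ℤ} {n : ℤ} (h : ∀ i, n ∣ v i) (i : Fin m) :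
    n ∣ shiftDown v i := by
  unfold shiftDown
  split_ifs
  exacts [dvd_zero n, h _]

end Shift

section Idealizing

theorem Idealizing.isUpperTriangular {m : ℕ} {B : Matrix (Fin m) (Fin m) ℤ} (hB : Idealizing B) :
    B.IsUpperTriangular :=
  fun i j => hB.1 i j

theorem Idealizing.diag_ne_zero {m : ℕ} {B : Matrix (Fin m) (Fin m) ℤ} (hB : Idealizing B)
    (i : Fin m) : B i i ≠ 0 := by
  have hdet : B.det ≠ 0 := hB.2.1
  rw [det_of_isUpperTriangular hB.isUpperTriangular] at hdet
  exact Finset.prod_ne_zero_iff.1 hdet i (Finset.mem_univ i)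

variable {e : ℕ} {B : Matrix (Fin (e + 1)) (Fin (e + 1)) ℤ}

theorem idealizing_iff :
    Idealizing B ↔ B.IsUpperTriangular ∧ B.det ≠ 0 ∧
      ∀ j : Fin e, shiftDown (B.col j.castSucc) ∈ leadingColSpan B j.succ := by
  have hcols (j : Fin e) : {w | ∃ l : Fin (e + 1), (l : ℕ) ≤ j + 1 ∧ w = fun i => B i l} =
      B.col '' Set.Iic j.succ := by
    ext w
    exact exists_congr fun l => and_congr_right' eq_comm
  refine and_congr Iff.rfl (and_congr_right' ?_)
  have hlast : ¬(Fin.last e : ℕ) + 2 ≤ e + 1 := by simp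
  have hcast (j : Fin e) : (j.castSucc : ℕ) + 2 ≤ e + 1 := by simp
  simp only [leadingColSpan, ← hcols, Fin.forall_fin_succ' (n := e), hlast, hcast, false_imp_iff,
    true_imp_iff, and_true]
  rfl

/-- If `σ(b_j) = ∑_{l ≤ j+1} c_l b_l`, then row `j + 1` gives `b_{j,j} = c_{j+1} b_{j+1,j+1}`, while
`b_{j,j}` divides `c_{j+1} b_{j+1}` because it divides `σ(b_j)` and `b_0, …, b_j`. -/
theorem Idealizing.diag_succ_dvd (hB : Idealizing B) {j : Fin e}
    (hj : ∀ l ≤ j.castSucc, ∀ i, B j.castSucc j.castSucc ∣ B i l) :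
    ∀ l ≤ j.succ, ∀ i, B j.succ j.succ ∣ B i l := by
  obtain ⟨c, hc, hshift⟩ := mem_leadingColSpan_iff.1 ((idealizing_iff.1 hB).2.2 j)
  have hdiag : B j.castSucc j.castSucc = B j.succ j.succ * c j.succ := by
    rw [← mulVec_apply_of_isUpperTriangular hB.isUpperTriangular hc, hshift, shiftDown_succ,
      col_apply]
  intro l hl i
  rcases hl.lt_or_eq with hlt | rfl
  · exact (Dvd.intro _ hdiag.symm).trans (hj l (Fin.le_castSucc_iff.2 hlt) i)
  · have hrow : B j.castSucc j.castSucc ∣ ∑ l, B i l * c l := by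
      change _ ∣ (B *ᵥ c) i
      rw [hshift]
      exact dvd_shiftDown (hj _ le_rfl) i
    have hothers : ∀ l ∈ Finset.univ.erase j.succ, B j.castSucc j.castSucc ∣ B i l * c l := by
      intro l hl
      rcases lt_or_gt_of_ne (Finset.ne_of_mem_erase hl) with hlt | hgt
      · exact (hj l (Fin.le_castSucc_iff.2 hlt) i).mul_right _
      · rw [hc l hgt, mul_zero]
        exact dvd_zero _
    have hc0 : c j.succ ≠ 0 := right_ne_zero_of_mul (hdiag ▸ hB.diag_ne_zero j.castSucc)
    rw [← Finset.add_sum_erase _ _ (Finset.mem_univ j.succ),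
      dvd_add_left (Finset.dvd_sum hothers), hdiag] at hrow
    exact (mul_dvd_mul_iff_right hc0).1 hrow

theorem Idealizing.diag_dvd (hB : Idealizing B) (j : Fin (e + 1)) :
    ∀ l ≤ j, ∀ i, B j j ∣ B i l := by
  induction j using Fin.induction with
  | zero =>
    intro l hl i
    obtain rfl := Fin.le_zero_iff.1 hl
    rcases (Fin.zero_le i).eq_or_lt with rfl | hi
    · exact dvd_rfl
    · rw [hB.isUpperTriangular hi]
      exact dvd_zero _
  | succ j ih => exact hB.diag_succ_dvd ih

end Idealizing

section Extend

variable {d : ℕ} (A : Matrix (Fin d) (Fin d) ℤ) (β : Fin d → ℤ)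

@[simp]
theorem extendMatrix_castSucc_castSucc (i j : Fin d) :
    extendMatrix A β i.castSucc j.castSucc = A i j := by
  simp [extendMatrix]

@[simp]
theorem extendMatrix_castSucc_last (i : Fin d) :
    extendMatrix A β i.castSucc (Fin.last d) = β i := by
  simp [extendMatrix]

@[simp]
theorem extendMatrix_last_castSucc (j : Fin d) :
    extendMatrix A β (Fin.last d) j.castSucc = 0 := by
  simp [extendMatrix]

@[simp]
theorem extendMatrix_last_last : extendMatrix A β (Fin.last d) (Fin.last d) = 1 := by
  simp [extendMatrix]

theorem col_extendMatrix_castSucc (j : Fin d) :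
    (extendMatrix A β).col j.castSucc = Fin.snoc (A.col j) 0 := by
  ext i
  cases i using Fin.lastCases <;> simp

theorem extendMatrix_mulVec_snoc (z : Fin d → ℤ) (t : ℤ) :
    extendMatrix A β *ᵥ Fin.snoc z t = Fin.snoc (A *ᵥ z + t • β) t := by
  ext i
  cases i using Fin.lastCases <;>
    simp [mulVec, dotProduct, Fin.sum_univ_castSucc, mul_comm]

theorem det_extendMatrix : (extendMatrix A β).det = A.det := by
  have hblock : (extendMatrix A β).submatrix Fin.castSucc Fin.castSucc = A := by
    ext i j
    simp
  rw [det_succ_row _ (Fin.last d), Fin.sum_univ_castSucc]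
  simp [hblock, ← two_mul]

variable {A β}

theorem isUpperTriangular_extendMatrix_iff :
    (extendMatrix A β).IsUpperTriangular ↔ A.IsUpperTriangular := by
  simp [IsUpperTriangular, BlockTriangular, Fin.forall_fin_succ' (n := d), Fin.le_last]

theorem snoc_zero_mem_leadingColSpan_extendMatrix_iff {v : Fin d → ℤ} {k : Fin d} :
    Fin.snoc v 0 ∈ leadingColSpan (extendMatrix A β) k.castSucc ↔ v ∈ leadingColSpan A k := by
  simp only [mem_leadingColSpan_iff, (Fin.snocEquiv fun _ => ℤ).surjective.exists, Prod.exists]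
  simp [Fin.snocEquiv, Fin.forall_fin_succ' (n := d), extendMatrix_mulVec_snoc]

theorem snoc_mem_leadingColSpan_extendMatrix_last_iff {v : Fin d → ℤ} {a : ℤ} :
    Fin.snoc v a ∈ leadingColSpan (extendMatrix A β) (Fin.last d) ↔
      ∃ z, A *ᵥ z + a • β = v := by
  simp only [mem_leadingColSpan_iff, (Fin.snocEquiv fun _ => ℤ).surjective.exists, Prod.exists]
  simp [Fin.snocEquiv, extendMatrix_mulVec_snoc, Fin.snoc_inj, (Fin.le_last _).not_gt]

end Extend

section ReducedIdealizing

variable {e : ℕ} {A : Matrix (Fin (e + 1)) (Fin (e + 1)) ℤ} {β : Fin (e + 1) → ℤ}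

theorem idealizing_extendMatrix_iff :
    Idealizing (extendMatrix A β) ↔ Idealizing A ∧
      ∃ z, A *ᵥ z + A (Fin.last e) (Fin.last e) • β = shiftDown (A.col (Fin.last e)) := by
  rw [idealizing_iff, idealizing_iff, isUpperTriangular_extendMatrix_iff, det_extendMatrix]
  simp only [and_assoc, Fin.forall_fin_succ' (n := e)]
  refine and_congr_right fun htri => and_congr_right' (and_congr (forall_congr' fun j => ?_) ?_)
  · have hlast : A.col j.castSucc (Fin.last e) = 0 := htri j.castSucc_lt_last
    rw [col_extendMatrix_castSucc, shiftDown_snoc, hlast, Fin.succ_castSucc,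
      snoc_zero_mem_leadingColSpan_extendMatrix_iff]
  · rw [col_extendMatrix_castSucc, shiftDown_snoc, Fin.succ_last,
      snoc_mem_leadingColSpan_extendMatrix_last_iff, col_apply]

theorem reducedIdealizing_extendMatrix_iff :
    ReducedIdealizing (extendMatrix A β) ↔ ReducedIdealizing A ∧
      (∃ z, A *ᵥ z + A (Fin.last e) (Fin.last e) • β = shiftDown (A.col (Fin.last e))) ∧
      ∀ i, β i ∈ Set.Ico 0 (A i i) := by
  have hpos : (∀ i, 0 < extendMatrix A β i i) ↔ ∀ i, 0 < A i i := by
    simp [Fin.forall_fin_succ' (n := e + 1)]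
  have hbounds : (∀ i j : Fin (e + 2), (i : ℕ) < j →
        0 ≤ extendMatrix A β i j ∧ extendMatrix A β i j < extendMatrix A β i i) ↔
      (∀ i j : Fin (e + 1), (i : ℕ) < j → 0 ≤ A i j ∧ A i j < A i i) ∧
        ∀ i, β i ∈ Set.Ico 0 (A i i) := by
    simp [Fin.forall_fin_succ' (n := e + 1), forall_and,
      and_and_and_comm]
  rw [ReducedIdealizing, ReducedIdealizing, idealizing_extendMatrix_iff, hpos, hbounds]
  tauto

end ReducedIdealizing

/-- Lemma 3.1: for a reduced idealizing `d×d` matrix `A`, the number of `β ∈ ℤ^d` such that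
`Ã(β)` is a reduced idealizing matrix equals `a_{d-1,d-1}^d`. -/
theorem card_extensions_of_reducedIdealizing {d : ℕ} (hd : 0 < d)
    (A : Matrix (Fin d) (Fin d) ℤ) (hA : ReducedIdealizing A) :
    (Nat.card {β : Fin d → ℤ // ReducedIdealizing (extendMatrix A β)} : ℤ) =
      (A ⟨d - 1, Nat.sub_lt hd one_pos⟩ ⟨d - 1, Nat.sub_lt hd one_pos⟩) ^ d := by
  obtain ⟨e, rfl⟩ : ∃ e, d = e + 1 := Nat.exists_eq_add_one.2 hd
  change _ = A (Fin.last e) (Fin.last e) ^ (e + 1)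
  obtain ⟨hideal, hpos, -⟩ := id hA
  obtain ⟨n, hn⟩ := Int.eq_ofNat_of_zero_le (hpos (Fin.last e)).le
  have hn0 : 0 < n := by exact_mod_cast hn ▸ hpos (Fin.last e)
  have hdvd (i j) : (n : ℤ) ∣ A i j := hn ▸ hideal.diag_dvd (Fin.last e) j j.le_last i
  have hcard := card_box_exists_mulVec_add_smul_eq hideal.isUpperTriangular hpos hn0 hdvd
    (dvd_shiftDown fun i => hdvd i (Fin.last e))
  simp only [reducedIdealizing_extendMatrix_iff, hA, true_and, hn]
  exact mod_cast hcard
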